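/- (Beltrami) Let Ω ⊆ ℝ² be open and let X, X̃ : Ω → ℝ³ be smooth immersions with pointwise equal first fundamental forms: ⟨X_u,X_u⟩ = ⟨X̃_u,X̃_u⟩, ⟨X_u,X_v⟩ = ⟨X̃_u,X̃_v⟩, ⟨X_v,X_v⟩ = ⟨X̃_v,X̃_v⟩ on Ω. Let R : Ω → ℝ be smooth and let ν, ν̃ : Ω → ℝ³ be smooth unit vector fields such that ξ = X − R·ν and ξ̃ = X̃ − R·ν̃ satisfy the envelope conditions ⟨ν, ξ_u⟩ = ⟨ν, ξ_v⟩ = 0 and ⟨ν̃, ξ̃_u⟩ = ⟨ν̃, ξ̃_v⟩ = 0 on Ω, with N = (X_u × X_v)/‖X_u × X_v‖, Ñ = (X̃_u × X̃_v)/‖X̃_u × X̃_v‖, and suppose ⟨ν, N⟩ and ⟨ν̃, Ñ⟩ are both nonnegative on Ω. Then at every point of Ω the angle cosines coincide: ⟨ν, X_u⟩/‖X_u‖ = ⟨ν̃, X̃_u⟩/‖X̃_u‖, ⟨ν, X_v⟩/‖X_v‖ = ⟨ν̃, X̃_v⟩/‖X̃_v‖, and ⟨ν, N⟩ = ⟨ν̃,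 Ñ⟩. -/

import Mathlib

noncomputable section

/-- Euclidean dot product on ℝ³ (as `Fin 3 → ℝ`). -/
def dot3 (a b : Fin 3 → ℝ) : ℝ := a 0 * b 0 + a 1 * b 1 + a 2 * b 2

/-- Euclidean norm on ℝ³. -/
def norm3 (a : Fin 3 → ℝ) : ℝ := Real.sqrt (dot3 a a)

/-- Cross product on ℝ³. -/
def cross3 (a b : Fin 3 → ℝ) : Fin 3 → ℝ :=
  ![a 1 * b 2 - a 2 * b 1, a 2 * b 0 - a 0 * b 2, a 0 * b 1 - a 1 * b 0]

/-!
Differentiating `⟨ν, ν⟩ = 1` shows that `ν` is orthogonal to its own derivatives, so the envelope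
condition on `ξ = X - R ν` reads `⟨ν, dX⟩ = dR`: these products depend on `R` alone. Hence
`(ν, X_u, X_v)` and `(ν̃, X̃_u, X̃_v)` have the same Gram matrix, whose determinant is the square of
the triple product `⟨ν, X_u × X_v⟩`. The triple products therefore agree up to sign, and the sign
hypothesis makes them equal.
-/

section BilinearForm

variable {E V : Type*} [NormedAddCommGroup E] [NormedSpace ℝ E]
  [NormedAddCommGroup V] [NormedSpace ℝ V] {B : V →L[ℝ] V →L[ℝ] ℝ}
  {X ν : E → V} {R : E → ℝ} {p : E}

theorem apply_fderiv_eq_zero_of_apply_self_const (hB : ∀ x y, B x y = B y x) {c : ℝ}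
    (hν : DifferentiableAt ℝ ν p) (hc : ∀ᶠ q in nhds p, B (ν q) (ν q) = c) (w : E) :
    B (ν p) (fderiv ℝ ν p w) = 0 := by
  have hconst : fderiv ℝ (fun q => B (ν q) (ν q)) p w = 0 := by
    rw [Filter.EventuallyEq.fderiv_eq (f := fun _ => c) hc, fderiv_fun_const]
    rfl
  have hleibniz : B (ν p) (fderiv ℝ ν p w) + B (fderiv ℝ ν p w) (ν p) = 0 := by
    simpa [B.fderiv_of_bilinear hν hν] using hconst
  linarith [hB (ν p) (fderiv ℝ ν p w)]

theorem apply_fderiv_sub_smul_of_apply_self_eq_one (hB : ∀ x y, B x y = B y x)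
    (hX : DifferentiableAt ℝ X p) (hR : DifferentiableAt ℝ R p) (hν : DifferentiableAt ℝ ν p)
    (hunit : ∀ᶠ q in nhds p, B (ν q) (ν q) = 1) (w : E) :
    B (ν p) (fderiv ℝ (X - R • ν) p w) = B (ν p) (fderiv ℝ X p w) - fderiv ℝ R p w := by
  have hξ : fderiv ℝ (X - R • ν) p w =
      fderiv ℝ X p w - (R p • fderiv ℝ ν p w + fderiv ℝ R p w • ν p) := by
    rw [fderiv_sub hX (hR.smul hν), fderiv_smul hR hν]
    simp
  simp [hξ, apply_fderiv_eq_zero_of_apply_self_const hB hν hunit w, hunit.self_of_nhds]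

end BilinearForm

section TripleProduct

open Matrix

theorem triple_product_sq_eq_det_gram {S : Type*} [CommRing S] (u v w : Fin 3 → S) :
    (u ⬝ᵥ v ⨯₃ w) ^ 2 =
      !![u ⬝ᵥ u, u ⬝ᵥ v, u ⬝ᵥ w;
         u ⬝ᵥ v, v ⬝ᵥ v, v ⬝ᵥ w;
         u ⬝ᵥ w, v ⬝ᵥ w, w ⬝ᵥ w].det := by
  have hgram : !![u ⬝ᵥ u, u ⬝ᵥ v, u ⬝ᵥ w;
                  u ⬝ᵥ v, v ⬝ᵥ v, v ⬝ᵥ w;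
                  u ⬝ᵥ w, v ⬝ᵥ w, w ⬝ᵥ w] = of ![u, v, w] * (of ![u, v, w])ᵀ := by
    ext i j
    fin_cases i <;> fin_cases j <;> simp [mul_apply, dotProduct, mul_comm]
  rw [hgram, det_mul, det_transpose, triple_product_eq_det, sq]
  rfl

theorem dot3_eq_dotProduct (a b : Fin 3 → ℝ) : dot3 a b = a ⬝ᵥ b :=
  (vec3_dotProduct a b).symm

theorem cross3_eq_crossProduct (a b : Fin 3 → ℝ) : cross3 a b = a ⨯₃ b :=
  rfl

theorem dot3_smul (c : ℝ) (a b : Fin 3 → ℝ) : dot3 a (c • b) = c * dot3 a b := by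
  simp only [dot3_eq_dotProduct, dotProduct_smul, smul_eq_mul]

theorem norm3_eq_one_iff {a : Fin 3 → ℝ} : norm3 a = 1 ↔ dot3 a a = 1 :=
  Real.sqrt_eq_one

/-- The unit normal `a × b / ‖a × b‖` of the plane spanned by `a` and `b`; it is `0` when `a` and
`b` are linearly dependent. -/
def unitNormal3 (a b : Fin 3 → ℝ) : Fin 3 → ℝ :=
  (norm3 (cross3 a b))⁻¹ • cross3 a b

theorem dot3_unitNormal3_eq_of_gram_eq {n a b n' a' b' : Fin 3 → ℝ}
    (hnn : dot3 n n = dot3 n' n') (hna : dot3 n a = dot3 n' a') (hnb : dot3 n b = dot3 n' b')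
    (haa : dot3 a a = dot3 a' a') (hab : dot3 a b = dot3 a' b') (hbb : dot3 b b = dot3 b' b')
    (hpos : 0 ≤ dot3 n (unitNormal3 a b)) (hpos' : 0 ≤ dot3 n' (unitNormal3 a' b')) :
    dot3 n (unitNormal3 a b) = dot3 n' (unitNormal3 a' b') := by
  simp only [dot3_eq_dotProduct] at hnn hna hnb haa hab hbb
  have harea : norm3 (cross3 a b) = norm3 (cross3 a' b') := by
    simp only [norm3, dot3_eq_dotProduct, cross3_eq_crossProduct, cross_dot_cross,
      dotProduct_comm b a, dotProduct_comm b' a', haa, hab, hbb]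
  have htriple : dot3 n (cross3 a b) ^ 2 = dot3 n' (cross3 a' b') ^ 2 := by
    simp only [dot3_eq_dotProduct, cross3_eq_crossProduct, triple_product_sq_eq_det_gram,
      hnn, hna, hnb, haa, hab, hbb]
  refine (sq_eq_sq₀ hpos hpos').1 ?_
  simp only [unitNormal3, dot3_smul, mul_pow, harea, htriple]

end TripleProduct

section Beltrami

variable {E : Type*} [NormedAddCommGroup E] [NormedSpace ℝ E]
  {X Xt ν νt : E → Fin 3 → ℝ} {R : E → ℝ} {p : E}

theorem dot3_fderiv_sub_smul (hX : DifferentiableAt ℝ X p) (hR : DifferentiableAt ℝ R p)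
    (hν : DifferentiableAt ℝ ν p) (hunit : ∀ᶠ q in nhds p, norm3 (ν q) = 1) (w : E) :
    dot3 (ν p) (fderiv ℝ (X - R • ν) p w) = dot3 (ν p) (fderiv ℝ X p w) - fderiv ℝ R p w := by
  let B : (Fin 3 → ℝ) →L[ℝ] (Fin 3 → ℝ) →L[ℝ] ℝ :=
    (dotProductBilin ℝ ℝ).toContinuousBilinearMap
  simp only [norm3_eq_one_iff, dot3_eq_dotProduct] at hunit ⊢
  exact apply_fderiv_sub_smul_of_apply_self_eq_one (B := B) dotProduct_comm hX hR hν hunit w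

theorem dot3_fderiv_eq_of_envelope (hX : DifferentiableAt ℝ X p) (hXt : DifferentiableAt ℝ Xt p)
    (hR : DifferentiableAt ℝ R p) (hν : DifferentiableAt ℝ ν p) (hνt : DifferentiableAt ℝ νt p)
    (hunit : ∀ᶠ q in nhds p, norm3 (ν q) = 1) (hunitt : ∀ᶠ q in nhds p, norm3 (νt q) = 1) {w : E}
    (henv : dot3 (ν p) (fderiv ℝ (X - R • ν) p w) = 0)
    (henvt : dot3 (νt p) (fderiv ℝ (Xt - R • νt) p w) = 0) :
    dot3 (ν p) (fderiv ℝ X p w) = dot3 (νt p) (fderiv ℝ Xt p w) := by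
  rw [dot3_fderiv_sub_smul hX hR hν hunit, sub_eq_zero] at henv
  rw [dot3_fderiv_sub_smul hXt hR hνt hunitt, sub_eq_zero] at henvt
  exact henv.trans henvt.symm

theorem statement2_general {u v : E}
    (hX : DifferentiableAt ℝ X p) (hXt : DifferentiableAt ℝ Xt p) (hR : DifferentiableAt ℝ R p)
    (hν : DifferentiableAt ℝ ν p) (hνt : DifferentiableAt ℝ νt p)
    (_himm : LinearIndependent ℝ ![fderiv ℝ X p u, fderiv ℝ X p v])
    (hisoE : dot3 (fderiv ℝ X p u) (fderiv ℝ X p u) = dot3 (fderiv ℝ Xt p u) (fderiv ℝ Xt p u))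
    (hisoF : dot3 (fderiv ℝ X p u) (fderiv ℝ X p v) = dot3 (fderiv ℝ Xt p u) (fderiv ℝ Xt p v))
    (hisoG : dot3 (fderiv ℝ X p v) (fderiv ℝ X p v) = dot3 (fderiv ℝ Xt p v) (fderiv ℝ Xt p v))
    (hunit : ∀ᶠ q in nhds p, norm3 (ν q) = 1) (hunitt : ∀ᶠ q in nhds p, norm3 (νt q) = 1)
    (henv : dot3 (ν p) (fderiv ℝ (X - R • ν) p u) = 0 ∧
      dot3 (ν p) (fderiv ℝ (X - R • ν) p v) = 0)
    (henvt : dot3 (νt p) (fderiv ℝ (Xt - R • νt) p u) = 0 ∧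
      dot3 (νt p) (fderiv ℝ (Xt - R • νt) p v) = 0)
    (hpos : 0 ≤ dot3 (ν p) (unitNormal3 (fderiv ℝ X p u) (fderiv ℝ X p v)))
    (hpost : 0 ≤ dot3 (νt p) (unitNormal3 (fderiv ℝ Xt p u) (fderiv ℝ Xt p v))) :
    dot3 (ν p) (fderiv ℝ X p u) / norm3 (fderiv ℝ X p u) =
        dot3 (νt p) (fderiv ℝ Xt p u) / norm3 (fderiv ℝ Xt p u) ∧
      dot3 (ν p) (fderiv ℝ X p v) / norm3 (fderiv ℝ X p v) =
        dot3 (νt p) (fderiv ℝ Xt p v) / norm3 (fderiv ℝ Xt p v) ∧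
      dot3 (ν p) (unitNormal3 (fderiv ℝ X p u) (fderiv ℝ X p v)) =
        dot3 (νt p) (unitNormal3 (fderiv ℝ Xt p u) (fderiv ℝ Xt p v)) := by
  have hu := dot3_fderiv_eq_of_envelope hX hXt hR hν hνt hunit hunitt henv.1 henvt.1
  have hv := dot3_fderiv_eq_of_envelope hX hXt hR hν hνt hunit hunitt henv.2 henvt.2
  have hnn : dot3 (ν p) (ν p) = dot3 (νt p) (νt p) :=
    (norm3_eq_one_iff.1 hunit.self_of_nhds).trans (norm3_eq_one_iff.1 hunitt.self_of_nhds).symm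
  refine ⟨?_, ?_, dot3_unitNormal3_eq_of_gram_eq hnn hu hv hisoE hisoF hisoG hpos hpost⟩
  · rw [hu, norm3, norm3, hisoE]
  · rw [hv, norm3, norm3, hisoG]

end Beltrami

/-- (Beltrami) For isometric surfaces `X`, `X̃` and congruences of spheres `[X,R]`, `[X̃,R]`
with the same radius function and envelopes chosen with the same sign, the angles between
the unit vector `ν` (resp. `ν̃`) and `X_u`, `X_v`, `N` (resp. `X̃_u`, `X̃_v`, `Ñ`) coincide. -/
theorem statement2 (Ω : Set (ℝ × ℝ)) (hΩ : IsOpen Ω)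
    (X Xt ν νt : ℝ × ℝ → Fin 3 → ℝ) (R : ℝ × ℝ → ℝ)
    (hX : ContDiffOn ℝ (⊤ : ℕ∞) X Ω) (hXt : ContDiffOn ℝ (⊤ : ℕ∞) Xt Ω)
    (hR : ContDiffOn ℝ (⊤ : ℕ∞) R Ω)
    (hν : ContDiffOn ℝ (⊤ : ℕ∞) ν Ω) (hνt : ContDiffOn ℝ (⊤ : ℕ∞) νt Ω)
    (himm : ∀ p ∈ Ω, LinearIndependent ℝ ![fderiv ℝ X p (1, 0), fderiv ℝ X p (0, 1)])
    (himmt : ∀ p ∈ Ω, LinearIndependent ℝ ![fderiv ℝ Xt p (1, 0), fderiv ℝ Xt p (0, 1)])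
    -- the first fundamental forms of `X` and `X̃` coincide pointwise
    (hiso : ∀ p ∈ Ω,
      dot3 (fderiv ℝ X p (1, 0)) (fderiv ℝ X p (1, 0)) =
        dot3 (fderiv ℝ Xt p (1, 0)) (fderiv ℝ Xt p (1, 0)) ∧
      dot3 (fderiv ℝ X p (1, 0)) (fderiv ℝ X p (0, 1)) =
        dot3 (fderiv ℝ Xt p (1, 0)) (fderiv ℝ Xt p (0, 1)) ∧
      dot3 (fderiv ℝ X p (0, 1)) (fderiv ℝ X p (0, 1)) =
        dot3 (fderiv ℝ Xt p (0, 1)) (fderiv ℝ Xt p (0, 1)))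
    (hunit : ∀ p ∈ Ω, norm3 (ν p) = 1) (hunitt : ∀ p ∈ Ω, norm3 (νt p) = 1)
    (ξ ξt : ℝ × ℝ → Fin 3 → ℝ)
    (hξ : ∀ p, ξ p = X p - R p • ν p)
    (hξt : ∀ p, ξt p = Xt p - R p • νt p)
    (henv : ∀ p ∈ Ω, dot3 (ν p) (fderiv ℝ ξ p (1, 0)) = 0 ∧
                     dot3 (ν p) (fderiv ℝ ξ p (0, 1)) = 0)
    (henvt : ∀ p ∈ Ω, dot3 (νt p) (fderiv ℝ ξt p (1, 0)) = 0 ∧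
                      dot3 (νt p) (fderiv ℝ ξt p (0, 1)) = 0)
    -- both envelopes are chosen with the same (positive) sign
    (hsign : ∀ p ∈ Ω,
      0 ≤ dot3 (ν p) ((norm3 (cross3 (fderiv ℝ X p (1, 0)) (fderiv ℝ X p (0, 1))))⁻¹ •
            cross3 (fderiv ℝ X p (1, 0)) (fderiv ℝ X p (0, 1))) ∧
      0 ≤ dot3 (νt p) ((norm3 (cross3 (fderiv ℝ Xt p (1, 0)) (fderiv ℝ Xt p (0, 1))))⁻¹ •
            cross3 (fderiv ℝ Xt p (1, 0)) (fderiv ℝ Xt p (0, 1)))) :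
    ∀ p ∈ Ω,
      let Xu := fderiv ℝ X p (1, 0)
      let Xv := fderiv ℝ X p (0, 1)
      let N := (norm3 (cross3 Xu Xv))⁻¹ • cross3 Xu Xv
      let Xtu := fderiv ℝ Xt p (1, 0)
      let Xtv := fderiv ℝ Xt p (0, 1)
      let Nt := (norm3 (cross3 Xtu Xtv))⁻¹ • cross3 Xtu Xtv
      dot3 (ν p) Xu / norm3 Xu = dot3 (νt p) Xtu / norm3 Xtu ∧
      dot3 (ν p) Xv / norm3 Xv = dot3 (νt p) Xtv / norm3 Xtv ∧
      dot3 (ν p) N = dot3 (νt p) Nt := by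
  intro p hp
  obtain rfl : ξ = X - R • ν := funext hξ
  obtain rfl : ξt = Xt - R • νt := funext hξt
  have hΩp : Ω ∈ nhds p := hΩ.mem_nhds hp
  obtain ⟨hisoE, hisoF, hisoG⟩ := hiso p hp
  exact statement2_general ((hX.contDiffAt hΩp).differentiableAt (by simp))
    ((hXt.contDiffAt hΩp).differentiableAt (by simp))
    ((hR.contDiffAt hΩp).differentiableAt (by simp))
    ((hν.contDiffAt hΩp).differentiableAt (by simp))
    ((hνt.contDiffAt hΩp).differentiableAt (by simp))
    (himm p hp) hisoE hisoF hisoG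
    (Filter.eventually_of_mem hΩp hunit) (Filter.eventually_of_mem hΩp hunitt)
    (henv p hp) (henvt p hp) (hsign p hp).1 (hsign p hp).2
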